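/- Suppose there exist L > 0 and a non-decreasing function φ : [0,∞) → [0,∞) with φ(t)/t < 1 for all t > 0 and t ↦ φ(t)/t non-increasing on (0,∞), such that d(W_n(x,y), W_n(x',y')) ≤ L|x − x'| + φ(d(y,y')) for all (x,y), (x',y') ∈ [a,b] × Y and all n ≥ 1. Let f_* be the unique fixed point of the operator T in C([a,b]). Then for every f_0 ∈ C([a,b]), the graphs G_{T^{[k]}(f_0)} converge in the Hausdorff metric on nonempty compact subsets of [a,b] × Y to the graph G_{f_*} as k → ∞. -/

import Mathlib

/-!
Write `g k = T^[k] f0`. Every point `t < b` of the interval is `l (n + 1) u` for some `n` and `u`, so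
the functional equation at `u` gives `dist (g (k + 1) t) (fs t) ≤ φ (dist (g k u) (fs u))`; at `b` both
functions equal `M`. Fix `ε > 0` and put `c = φ ε / ε < 1`. Since `φ s / s` is non-increasing,
`φ s ≤ c * s` for `s ≥ ε`, hence by induction `dist (g k t) (fs t) ≤ max ε (c ^ k * diam Y)` uniformly
in `t`. So `g k` tends to `fs` uniformly, and a uniform bound on the distance of two functions bounds
the Hausdorff distance of their graphs.
-/


open Set Filter Metric

/-- The intervals `[x n, x (n + 1)]` cover `[x 0, b)` when `x` tends to `b`. -/
lemma exists_mem_Icc_succ {x : ℕ → ℝ} {b : ℝ} (hxb : Tendsto x atTop (nhds b)) {t : ℝ}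
    (h0 : x 0 ≤ t) (hb : t < b) : ∃ n, t ∈ Icc (x n) (x (n + 1)) := by
  classical
  have hex : ∃ n, t < x n := (hxb.eventually (lt_mem_nhds hb)).exists
  have hpos : Nat.find hex ≠ 0 := fun h => by
    have := Nat.find_spec hex
    rw [h] at this
    exact absurd this (not_lt.2 h0)
  obtain ⟨n, hn⟩ := Nat.exists_eq_succ_of_ne_zero hpos
  refine ⟨n, not_lt.1 (Nat.find_min hex (by omega)), ?_⟩
  have := Nat.find_spec hex
  rw [hn] at this
  exact this.le

/-- A pointwise bound on the distance of two functions bounds the Hausdorff distance of their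
graphs. -/
lemma hausdorffDist_graph_le {Y : Type*} [MetricSpace Y] {f g : ℝ → Y} {s : Set ℝ} {r : ℝ}
    (hr : 0 ≤ r) (h : ∀ t ∈ s, dist (f t) (g t) ≤ r) :
    Metric.hausdorffDist ((fun t : ℝ => (t, f t)) '' s) ((fun t : ℝ => (t, g t)) '' s) ≤ r := by
  refine Metric.hausdorffDist_le_of_mem_dist hr ?_ ?_
  · rintro _ ⟨t, ht, rfl⟩
    exact ⟨_, ⟨t, ht, rfl⟩, by simpa [Prod.dist_eq, hr] using h t ht⟩
  · rintro _ ⟨t, ht, rfl⟩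
    exact ⟨_, ⟨t, ht, rfl⟩, by simpa [Prod.dist_eq, hr, dist_comm] using h t ht⟩

theorem graphs_converge_in_Hausdorff_metric
    {Y : Type*} [MetricSpace Y] [CompactSpace Y]
    (x : ℕ → ℝ) (hx : StrictMono x) (b : ℝ) (hxb : Tendsto x atTop (nhds b))
    (y : ℕ → Y) (M : Y) (hyM : Tendsto y atTop (nhds M))
    (L : ℕ → ℝ) (hL0 : ∀ n : ℕ, 0 ≤ L (n + 1)) (hL1 : ∀ n : ℕ, L (n + 1) < 1)
    (hLsup : (⨆ n : ℕ, L (n + 1)) < 1)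
    (l : ℕ → ℝ → ℝ)
    (hl_lip : ∀ n : ℕ, ∀ u ∈ Icc (x 0) b, ∀ v ∈ Icc (x 0) b,
      |l (n + 1) u - l (n + 1) v| ≤ L (n + 1) * |u - v|)
    (hl_inj : ∀ n : ℕ, InjOn (l (n + 1)) (Icc (x 0) b))
    (hl_image : ∀ n : ℕ, l (n + 1) '' Icc (x 0) b = Icc (x n) (x (n + 1)))
    (hl_a : ∀ n : ℕ, l (n + 1) (x 0) = x n) (hl_b : ∀ n : ℕ, l (n + 1) b = x (n + 1))
    (W : ℕ → ℝ → Y → Y)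
    (hW_cont : ∀ n : ℕ, ContinuousOn (fun p : ℝ × Y => W (n + 1) p.1 p.2)
      (Icc (x 0) b ×ˢ (univ : Set Y)))
    (hW_a : ∀ n : ℕ, W (n + 1) (x 0) (y 0) = y n)
    (hW_b : ∀ n : ℕ, W (n + 1) b M = y (n + 1))
    (hW_diam : Tendsto (fun n : ℕ =>
      Metric.diam ((fun p : ℝ × Y => W (n + 1) p.1 p.2) ''
        (Icc (x 0) b ×ˢ (univ : Set Y)))) atTop (nhds 0))
    (Lc : ℝ) (hLc : 0 < Lc)
    (φ : ℝ → ℝ) (hφ0 : ∀ t : ℝ, 0 ≤ t → 0 ≤ φ t)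
    (hφmono : ∀ s t : ℝ, 0 ≤ s → s ≤ t → φ s ≤ φ t)
    (hφlt : ∀ t : ℝ, 0 < t → φ t / t < 1)
    (hφanti : ∀ s t : ℝ, 0 < s → s ≤ t → φ t / t ≤ φ s / s)
    (hWφ : ∀ n : ℕ, ∀ u ∈ Icc (x 0) b, ∀ v ∈ Icc (x 0) b, ∀ p q : Y,
      dist (W (n + 1) u p) (W (n + 1) v q) ≤ Lc * |u - v| + φ (dist p q))
    (T : (ℝ → Y) → ℝ → Y)
    (hT : ∀ f : ℝ → Y, ContinuousOn f (Icc (x 0) b) → f (x 0) = y 0 → f b = M →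
      (∀ n : ℕ, ∀ u ∈ Icc (x 0) b, T f (l (n + 1) u) = W (n + 1) u (f u)) ∧ T f b = M)
    (hTC : ∀ f : ℝ → Y, ContinuousOn f (Icc (x 0) b) → f (x 0) = y 0 → f b = M →
      ContinuousOn (T f) (Icc (x 0) b) ∧ T f (x 0) = y 0 ∧ T f b = M)
    :
    ∀ fs : ℝ → Y, ContinuousOn fs (Icc (x 0) b) → fs (x 0) = y 0 → fs b = M →
      EqOn (T fs) fs (Icc (x 0) b) →
      ∀ f0 : ℝ → Y, ContinuousOn f0 (Icc (x 0) b) → f0 (x 0) = y 0 → f0 b = M →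
        Tendsto (fun k : ℕ => Metric.hausdorffDist
            ((fun t : ℝ => (t, T^[k] f0 t)) '' Icc (x 0) b)
            ((fun t : ℝ => (t, fs t)) '' Icc (x 0) b))
          atTop (nhds 0) := by
  intro fs hfs hfsa hfsb hfix f0 hf0 hf0a hf0b
  have hiter : ∀ k : ℕ, ContinuousOn (T^[k] f0) (Icc (x 0) b) ∧
      T^[k] f0 (x 0) = y 0 ∧ T^[k] f0 b = M := by
    intro k
    induction k with
    | zero => exact ⟨hf0, hf0a, hf0b⟩
    | succ k ih =>
      rw [Function.iterate_succ_apply']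
      exact hTC _ ih.1 ih.2.1 ih.2.2
  have hbound : ∀ ε : ℝ, 0 < ε → ∀ k : ℕ, ∀ t ∈ Icc (x 0) b,
      dist (T^[k] f0 t) (fs t) ≤ max ε ((φ ε / ε) ^ k * Metric.diam (univ : Set Y)) := by
    intro ε hε k
    have hc0 : 0 ≤ φ ε / ε := div_nonneg (hφ0 ε hε.le) hε.le
    induction k with
    | zero =>
      intro t _
      refine le_max_of_le_right ?_
      simpa using Metric.dist_le_diam_of_mem isCompact_univ.isBounded (mem_univ (f0 t))
        (mem_univ (fs t))
    | succ k ih =>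
      intro t ht
      rcases ht.2.eq_or_lt with rfl | htb
      · rw [(hiter (k + 1)).2.2, hfsb, dist_self]
        exact le_max_of_le_left hε.le
      obtain ⟨n, hn⟩ := exists_mem_Icc_succ hxb ht.1 htb
      rw [← hl_image n] at hn
      obtain ⟨u, hu, rfl⟩ := hn
      obtain ⟨h1, h2, h3⟩ := hiter k
      rw [Function.iterate_succ_apply', (hT _ h1 h2 h3).1 n u hu, ← hfix ht,
        (hT fs hfs hfsa hfsb).1 n u hu]
      set m := max ε ((φ ε / ε) ^ k * Metric.diam (univ : Set Y)) with hm
      have hεm : ε ≤ m := le_max_left _ _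
      have hmpos : 0 < m := hε.trans_le hεm
      calc dist (W (n + 1) u (T^[k] f0 u)) (W (n + 1) u (fs u))
          ≤ Lc * |u - u| + φ (dist (T^[k] f0 u) (fs u)) := hWφ n u hu u hu _ _
        _ = φ (dist (T^[k] f0 u) (fs u)) := by simp
        _ ≤ φ m := hφmono _ _ dist_nonneg (ih u hu)
        _ ≤ φ ε / ε * m := (div_le_iff₀ hmpos).1 (hφanti ε m hε hεm)
        _ = max (φ ε / ε * ε) ((φ ε / ε) ^ (k + 1) * Metric.diam (univ : Set Y)) := by
            rw [hm, mul_max_of_nonneg _ _ hc0, pow_succ', mul_assoc]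
        _ ≤ _ := max_le_max_right _ (mul_le_of_le_one_left hε.le (hφlt ε hε).le)
  rw [Metric.tendsto_atTop]
  intro δ hδ
  have hε : 0 < δ / 2 := half_pos hδ
  have hlim : Tendsto (fun k : ℕ => (φ (δ / 2) / (δ / 2)) ^ k * Metric.diam (univ : Set Y))
      atTop (nhds 0) := by
    simpa using (tendsto_pow_atTop_nhds_zero_of_lt_one
      (div_nonneg (hφ0 _ hε.le) hε.le) (hφlt _ hε)).mul_const (Metric.diam (univ : Set Y))
  obtain ⟨N, hN⟩ := eventually_atTop.1 (hlim.eventually (gt_mem_nhds hδ))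
  refine ⟨N, fun k hk => ?_⟩
  rw [Real.dist_0_eq_abs, abs_of_nonneg Metric.hausdorffDist_nonneg]
  exact (hausdorffDist_graph_le (le_max_of_le_left hε.le) (hbound _ hε k)).trans_lt
    (max_lt (half_lt_self hδ) (hN k hk))
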